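/- Let E ⊆ ℕ be a set that is recursively enumerable (E is the domain of some partial computable function ℕ →. ℕ) but such that the membership predicate n ∈ E is not computable (not `ComputablePred`). Then the real number α = Σ_{n ∈ E} 10^{−(n+1)} is lower-computable but is not a computable real number. -/

import Mathlib

/-- A real number is computable if some computable sequence of rationals
approximates it with precision `2⁻ⁿ`. -/
def IsComputableReal (x : ℝ) : Prop :=
  ∃ f : ℕ → ℚ, Computable f ∧ ∀ n : ℕ, |(f n : ℝ) - x| < (2 : ℝ) ^ (-(n : ℤ))

/-- A real number is lower-computable if some computable monotone nondecreasing
sequence of rationals converges to it. -/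
def IsLowerComputableReal (x : ℝ) : Prop :=
  ∃ f : ℕ → ℚ, Computable f ∧ Monotone f ∧
    Filter.Tendsto (fun n => (f n : ℝ)) Filter.atTop (nhds x)

/-- A real number is upper-computable if some computable monotone nonincreasing
sequence of rationals converges to it. -/
def IsUpperComputableReal (x : ℝ) : Prop :=
  ∃ f : ℕ → ℚ, Computable f ∧ Antitone f ∧
    Filter.Tendsto (fun n => (f n : ℝ)) Filter.atTop (nhds x)

/-!
Let `α` be the sum over `n ∈ E` of computable positive rational weights `w n`. Fix finite stages
`F 0 ⊆ F 1 ⊆ ⋯` exhausting `E`, computably in the stage. The partial sums over `F s` increase to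
`α`, so `α` is lower-computable. If `α` were computable, one could search, given `n`, for a stage
`s` with `α < ∑ i ∈ F s, w i + w n`. From stage `s` on there is no room left for the term `w n`, so
`n ∈ E` only if already `n ∈ F s`, and membership in `E` would be decidable.

The instance `Primcodable ℚ` numbers the rationals in increasing order of the codes of their pairs
(numerator, denominator); because the set of these codes is decidable, numerators and denominators
can be computed.
-/

open Filter Topology

section Search

variable {α β : Type*} [Primcodable α]

theorem computablePred_comp [Primcodable β] {p : β → Prop} (hp : ComputablePred p) {f : α → β}
    (hf : Computable f) : ComputablePred fun x => p (f x) := by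
  classical exact (hp.decide.comp hf).computablePred

theorem computablePred_nat_eq {f g : α → ℕ} (hf : Computable f) (hg : Computable g) :
    ComputablePred fun x => f x = g x :=
  (Primrec.eq.decide.to_comp.comp hf hg).computablePred

theorem computablePred_nat_lt {f g : α → ℕ} (hf : Computable f) (hg : Computable g) :
    ComputablePred fun x => f x < g x :=
  (Primrec.nat_lt.decide.to_comp.comp hf hg).computablePred

theorem exists_computable_choice {P : α → ℕ → Prop}
    (hP : ComputablePred fun p : α × ℕ => P p.1 p.2) (hex : ∀ x, ∃ n, P x n) :
    ∃ f : α → ℕ, Computable f ∧ ∀ x, P x (f x) := by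
  classical exact ⟨_, Computable.find hP hex, fun x => Nat.find_spec (hex x)⟩

theorem computable_of_computablePred_graph [Denumerable β] {f : α → β}
    (hf : ComputablePred fun p : α × β => f p.1 = p.2) : Computable f := by
  obtain ⟨k, hk, hfk⟩ := exists_computable_choice (P := fun x k => f x = Denumerable.ofNat β k)
    (computablePred_comp hf (Computable.fst.pair ((Computable.ofNat β).comp Computable.snd)))
    fun x => ⟨Encodable.encode (f x), (Denumerable.ofNat_encode _).symm⟩
  exact ((Computable.ofNat β).comp hk).of_eq fun x => (hfk x).symm

end Search

theorem computable_subtype_ofNat {s : Set ℕ} [DecidablePred (· ∈ s)] [Infinite s]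
    (hs : ComputablePred (· ∈ s)) : Computable fun n => (Nat.Subtype.ofNat s n : ℕ) := by
  have hex (x : ℕ) : ∃ m, x + m + 1 ∈ s := by
    obtain ⟨y, hy, hxy⟩ := (Set.infinite_coe_iff.1 ‹_›).exists_gt x
    obtain ⟨k, rfl⟩ := Nat.exists_eq_add_of_lt hxy
    exact ⟨k, hy⟩
  have hgap : Computable fun x => Nat.find (hex x) :=
    Computable.find (P := fun x m => x + m + 1 ∈ s)
      (computablePred_comp hs (Primrec.succ.comp Primrec.nat_add).to_comp) hex
  have hsucc : Computable fun x => x + Nat.find (hex x) + 1 :=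
    Computable.succ.comp (Primrec.nat_add.to_comp.comp Computable.id hgap)
  refine (Computable.nat_rec Computable.id (Computable.const (Nat.Subtype.ofNat s 0 : ℕ))
    (hsucc.comp (Computable.snd.comp Computable.snd)).to₂).of_eq fun n => ?_
  induction n with
  | zero => rfl
  | succ n ih => exact congrArg (fun x => x + Nat.find (hex x) + 1) ih

theorem computable_encode_ofNat_ofEncodableOfInfinite {α : Type*} [Encodable α] [Infinite α]
    (h : ComputablePred (· ∈ Set.range (Encodable.encode : α → ℕ))) :
    Computable fun n =>
      Encodable.encode (@Denumerable.ofNat α (Denumerable.ofEncodableOfInfinite α) n) := by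
  let _ := Encodable.decidableRangeEncode α
  have : Infinite (Set.range (Encodable.encode : α → ℕ)) :=
    Infinite.of_injective _ (Equiv.ofInjective _ Encodable.encode_injective).injective
  refine (computable_subtype_ofNat h).of_eq fun n => ?_
  exact congrArg Subtype.val
    ((Encodable.equivRangeEncode α).apply_symm_apply (Nat.Subtype.ofNat _ n)).symm

theorem encode_int_natCast (n : ℕ) : Encodable.encode (n : ℤ) = 2 * n := rfl

theorem encode_int_negSucc (n : ℕ) : Encodable.encode (Int.negSucc n) = 2 * n + 1 := rfl

theorem primrec_int_natAbs : Primrec Int.natAbs :=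
  (Primrec.nat_div.comp (Primrec.succ.comp Primrec.encode) (Primrec.const 2)).of_eq fun z => by
    cases z with
    | ofNat n =>
      simp only [Int.ofNat_eq_natCast, encode_int_natCast, Int.natAbs_natCast]
      omega
    | negSucc n =>
      simp only [encode_int_negSucc, Int.natAbs_negSucc]
      omega

theorem primrec_int_toNat : Primrec Int.toNat :=
  (Primrec.ite (Primrec.eq.comp (Primrec.nat_mod.comp Primrec.encode (Primrec.const 2))
    (Primrec.const 0)) primrec_int_natAbs (Primrec.const 0)).of_eq fun z => by
    cases z with
    | ofNat n => simp [encode_int_natCast]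
    | negSucc n => simp [encode_int_negSucc]

theorem primrecRel_nat_dvd : PrimrecRel fun a b : ℕ => a ∣ b :=
  (Primrec.eq.comp (Primrec.nat_mod.comp Primrec.snd Primrec.fst) (Primrec.const 0)).of_eq
    fun _ => (Nat.dvd_iff_mod_eq_zero ..).symm

theorem nat_coprime_iff_forall_lt (a b : ℕ) :
    a.Coprime b ↔ ∀ d < a + b + 1, ¬(d ∣ a ∧ d ∣ b) ∨ d = 1 := by
  refine ⟨fun h d _ => or_iff_not_imp_left.2 fun hd => ?_, fun h => ?_⟩
  · obtain ⟨ha, hb⟩ := not_not.1 hd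
    exact Nat.eq_one_of_dvd_coprimes h ha hb
  · have hle : a.gcd b ≤ a + b := by
      rcases a.eq_zero_or_pos with rfl | ha
      · simp
      · exact (Nat.gcd_le_left b ha).trans (Nat.le_add_right a b)
    exact (h _ (Nat.lt_succ_of_le hle)).resolve_left
      (not_not.2 ⟨Nat.gcd_dvd_left a b, Nat.gcd_dvd_right a b⟩)

theorem primrecRel_nat_coprime : PrimrecRel Nat.Coprime := by
  have hdvd : PrimrecRel fun (d : ℕ) (p : ℕ × ℕ) => ¬(d ∣ p.1 ∧ d ∣ p.2) ∨ d = 1 :=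
    ((primrecRel_nat_dvd.comp Primrec.fst (Primrec.fst.comp Primrec.snd)).and
      (primrecRel_nat_dvd.comp Primrec.fst (Primrec.snd.comp Primrec.snd))).not.or
      (Primrec.eq.comp Primrec.fst (Primrec.const 1))
  have hrange : Primrec fun p : ℕ × ℕ => List.range (p.1 + p.2 + 1) :=
    Primrec.list_range.comp (Primrec.succ.comp Primrec.nat_add)
  refine (hdvd.forall_mem_list.comp hrange Primrec.id).of_eq fun p => ?_
  simp only [List.mem_range, id, nat_coprime_iff_forall_lt]

/-- The code of a rational number under the instance `Encodable ℚ`, as opposed to its code under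
`Primcodable ℚ`, which is its index in the enumeration by increasing `numDenCode`. -/
def numDenCode (q : ℚ) : ℕ := Nat.pair (Encodable.encode q.num) q.den

theorem mem_range_numDenCode {m : ℕ} : m ∈ Set.range numDenCode ↔
    0 < m.unpair.2 ∧ (Denumerable.ofNat ℤ m.unpair.1).natAbs.Coprime m.unpair.2 := by
  constructor
  · rintro ⟨q, rfl⟩
    simpa only [numDenCode, Nat.unpair_pair, Denumerable.ofNat_encode] using
      And.intro q.den_pos q.reduced
  · rintro ⟨hpos, hcop⟩
    exact ⟨⟨_, _, hpos.ne', hcop⟩, by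
      simp only [numDenCode, Denumerable.encode_ofNat, Nat.pair_unpair]⟩

theorem computablePred_mem_range_numDenCode : ComputablePred (· ∈ Set.range numDenCode) := by
  have hden : Primrec fun m : ℕ => m.unpair.2 := Primrec.snd.comp Primrec.unpair
  have hnum : Primrec fun m : ℕ => (Denumerable.ofNat ℤ m.unpair.1).natAbs :=
    primrec_int_natAbs.comp ((Primrec.ofNat ℤ).comp (Primrec.fst.comp Primrec.unpair))
  exact (((Primrec.nat_lt.comp (Primrec.const 0) hden).and
    (primrecRel_nat_coprime.comp hnum hden)).of_eq fun _ =>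
      mem_range_numDenCode.symm).computablePred

theorem encode_eq_numDenCode : @Encodable.encode ℚ Rat.instEncodable = numDenCode := rfl

theorem computable_numDenCode : Computable numDenCode := by
  have hrange : ComputablePred (· ∈ Set.range (@Encodable.encode ℚ Rat.instEncodable)) :=
    encode_eq_numDenCode ▸ computablePred_mem_range_numDenCode
  have hofNat : Computable fun n => numDenCode (Denumerable.ofNat ℚ n) :=
    encode_eq_numDenCode ▸
      @computable_encode_ofNat_ofEncodableOfInfinite ℚ Rat.instEncodable _ hrange
  exact (hofNat.comp Computable.encode).of_eq fun q =>
    congrArg numDenCode (Denumerable.ofNat_encode q)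

theorem computable_rat_num : Computable Rat.num :=
  ((Computable.ofNat ℤ).comp (Computable.fst.comp
    (Computable.unpair.comp computable_numDenCode))).of_eq fun q => by
      simp only [numDenCode, Nat.unpair_pair, Denumerable.ofNat_encode]

theorem computable_rat_den : Computable Rat.den :=
  (Computable.snd.comp (Computable.unpair.comp computable_numDenCode)).of_eq fun q => by
    simp only [numDenCode, Nat.unpair_pair]

section Fractions

variable {K : Type*} [Field K] {a b c a' b' c' : ℕ}

theorem natCast_sub_div_eq_iff [CharZero K] (hc : c ≠ 0) (hc' : c' ≠ 0) :
    ((a - b) / c : K) = (a' - b') / c' ↔ a * c' + b' * c = a' * c + b * c' := by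
  rw [div_eq_div_iff (Nat.cast_ne_zero.2 hc) (Nat.cast_ne_zero.2 hc'), sub_mul, sub_mul,
    sub_eq_sub_iff_add_eq_add]
  norm_cast

theorem natCast_sub_div_lt_iff [LinearOrder K] [IsStrictOrderedRing K] (hc : 0 < c)
    (hc' : 0 < c') :
    ((a - b) / c : K) < (a' - b') / c' ↔ a * c' + b' * c < a' * c + b * c' := by
  rw [div_lt_div_iff₀ (Nat.cast_pos.2 hc) (Nat.cast_pos.2 hc'), sub_mul, sub_mul, sub_lt_sub_iff]
  norm_cast

end Fractions

section Rat

variable {α : Type*} [Primcodable α]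

theorem exists_computable_nat_fraction {f : α → ℚ} (hf : Computable f) :
    ∃ a b c : α → ℕ, Computable a ∧ Computable b ∧ Computable c ∧ (∀ x, 0 < c x) ∧
      ∀ x, f x = (a x - b x) / c x := by
  have htoNat : Computable fun x => (f x).num.toNat :=
    primrec_int_toNat.to_comp.comp (computable_rat_num.comp hf)
  have hnatAbs : Computable fun x => (f x).num.natAbs :=
    primrec_int_natAbs.to_comp.comp (computable_rat_num.comp hf)
  refine ⟨_, _, _, htoNat, Primrec.nat_sub.to_comp.comp hnatAbs htoNat,
    computable_rat_den.comp hf, fun x => (f x).den_pos, fun x => ?_⟩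
  have hnum : ((f x).num.toNat : ℤ) - ((f x).num.natAbs - (f x).num.toNat : ℕ) = (f x).num := by
    omega
  rw [← Int.cast_natCast, ← Int.cast_natCast (R := ℚ) (_ - _), ← Int.cast_sub, hnum,
    Rat.num_div_den]

theorem computable_nat_mul_add_mul {a b c d : α → ℕ} (ha : Computable a) (hb : Computable b)
    (hc : Computable c) (hd : Computable d) : Computable fun x => a x * b x + c x * d x :=
  Primrec.nat_add.to_comp.comp (Primrec.nat_mul.to_comp.comp ha hb)
    (Primrec.nat_mul.to_comp.comp hc hd)

theorem computable_rat_of_nat_fraction {a b c : α → ℕ} (ha : Computable a) (hb : Computable b)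
    (hc : Computable c) (hpos : ∀ x, 0 < c x) :
    Computable fun x => ((a x - b x) / c x : ℚ) := by
  obtain ⟨a', b', c', ha', hb', hc', hpos', hq⟩ := exists_computable_nat_fraction Computable.id
  refine computable_of_computablePred_graph ((computablePred_nat_eq
    (computable_nat_mul_add_mul (ha.comp .fst) (hc'.comp .snd) (hb'.comp .snd) (hc.comp .fst))
    (computable_nat_mul_add_mul (ha'.comp .snd) (hc.comp .fst) (hb.comp .fst)
      (hc'.comp .snd))).of_eq fun p => ?_)
  rw [← natCast_sub_div_eq_iff (K := ℚ) (hpos p.1).ne' (hpos' p.2).ne', ← hq, id]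

theorem computablePred_rat_lt {f g : α → ℚ} (hf : Computable f) (hg : Computable g) :
    ComputablePred fun x => f x < g x := by
  obtain ⟨a, b, c, ha, hb, hc, hpos, hfx⟩ := exists_computable_nat_fraction hf
  obtain ⟨a', b', c', ha', hb', hc', hpos', hgx⟩ := exists_computable_nat_fraction hg
  refine (computablePred_nat_lt (computable_nat_mul_add_mul ha hc' hb' hc)
    (computable_nat_mul_add_mul ha' hc hb hc')).of_eq fun x => ?_
  rw [hfx, hgx, natCast_sub_div_lt_iff (hpos x) (hpos' x)]

theorem computable_rat_add {f g : α → ℚ} (hf : Computable f) (hg : Computable g) :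
    Computable fun x => f x + g x := by
  obtain ⟨a, b, c, ha, hb, hc, hpos, hfx⟩ := exists_computable_nat_fraction hf
  obtain ⟨a', b', c', ha', hb', hc', hpos', hgx⟩ := exists_computable_nat_fraction hg
  refine (computable_rat_of_nat_fraction (computable_nat_mul_add_mul ha hc' ha' hc)
    (computable_nat_mul_add_mul hb hc' hb' hc) (Primrec.nat_mul.to_comp.comp hc hc')
    fun x => Nat.mul_pos (hpos x) (hpos' x)).of_eq fun x => ?_
  have hc0 : (c x : ℚ) ≠ 0 := by exact_mod_cast (hpos x).ne'
  have hc0' : (c' x : ℚ) ≠ 0 := by exact_mod_cast (hpos' x).ne'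
  rw [hfx, hgx, div_add_div _ _ hc0 hc0']
  push_cast
  ring

theorem computable_rat_sum_range {f : α → ℕ → ℚ} (hf : Computable₂ f) {n : α → ℕ}
    (hn : Computable n) : Computable fun x => ∑ i ∈ Finset.range (n x), f x i := by
  have hstep : Computable₂ fun (x : α) (p : ℕ × ℚ) => p.2 + f x p.1 :=
    computable_rat_add (Computable.snd.comp .snd) (hf.comp .fst (Computable.fst.comp .snd))
  refine (Computable.nat_rec hn (Computable.const (0 : ℚ)) hstep).of_eq fun x => ?_
  induction n x with
  | zero => rfl
  | succ k ih => rw [Finset.sum_range_succ, ← ih]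

theorem computable_rat_inv_pow (b : ℕ) (hb : 0 < b) : Computable fun n : ℕ => ((b : ℚ) ^ n)⁻¹ := by
  have hpow : Primrec fun n : ℕ => b ^ n :=
    (Primrec₂.unpaired'.1 Nat.Primrec.pow).comp (Primrec.const b) Primrec.id
  refine (computable_rat_of_nat_fraction (Computable.const 1) (Computable.const 0) hpow.to_comp
    fun n => Nat.pow_pos hb).of_eq fun n => ?_
  simp

end Rat

theorem IsComputableReal.exists_computable_modulus {x : ℝ} (hx : IsComputableReal x)
    {g : ℕ → ℚ} (hg : Computable g) (hgx : Tendsto (fun s => (g s : ℝ)) atTop (𝓝 x))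
    {ε : ℕ → ℚ} (hε : Computable ε) (hpos : ∀ n, 0 < ε n) :
    ∃ s : ℕ → ℕ, Computable s ∧ ∀ n, x < g (s n) + ε n := by
  obtain ⟨f, hf, hfx⟩ := hx
  simp only [zpow_neg, zpow_natCast] at hfx
  have herr : Tendsto (fun s : ℕ => ((2 : ℝ) ^ s)⁻¹) atTop (𝓝 0) :=
    tendsto_inv_atTop_zero.comp (tendsto_pow_atTop_atTop_of_one_lt one_lt_two)
  have hf_tendsto : Tendsto (fun s => (f s : ℝ)) atTop (𝓝 x) :=
    tendsto_iff_norm_sub_tendsto_zero.2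
      (squeeze_zero (fun _ => norm_nonneg _) (fun s => (hfx s).le) herr)
  have hex (n : ℕ) : ∃ s, f s + ((2 : ℕ) ^ s : ℚ)⁻¹ < g s + ε n := by
    have hlim : x + 0 < x + ε n := by simpa using hpos n
    obtain ⟨s, hs⟩ := ((hf_tendsto.add herr).eventually_lt (hgx.add_const _) hlim).exists
    exact ⟨s, (Rat.cast_lt (K := ℝ)).1 (by push_cast; exact hs)⟩
  obtain ⟨s, hs, hs_lt⟩ := exists_computable_choice (computablePred_rat_lt
    (computable_rat_add (hf.comp .snd) ((computable_rat_inv_pow 2 two_pos).comp .snd))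
    (computable_rat_add (hg.comp .snd) (hε.comp .fst))) hex
  refine ⟨s, hs, fun n => ?_⟩
  have hlt : (f (s n) : ℝ) + (2 ^ s n)⁻¹ < g (s n) + ε n := by
    simpa using (Rat.cast_lt (K := ℝ)).2 (hs_lt n)
  linarith [(abs_lt.1 (hfx (s n))).1]

section Sums

variable {ι κ M : Type*} [AddCommMonoid M] [TopologicalSpace M] {E : Set ι} {f : ι → M}

theorem tendsto_sum_tsum_indicator [Preorder κ] {F : κ → Finset ι} (hF : Monotone F)
    (hE : ∀ i, i ∈ E ↔ ∃ s, i ∈ F s) (hf : Summable (E.indicator f)) :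
    Tendsto (fun s => ∑ i ∈ F s, f i) atTop (𝓝 (∑' i, E.indicator f i)) := by
  classical
  have hsub (s : κ) : ∀ i ∈ F s, i ∈ E := fun i hi => (hE i).2 ⟨s, hi⟩
  have hF_tendsto : Tendsto (fun s => (F s).subtype (· ∈ E)) atTop atTop :=
    tendsto_atTop_finset_of_monotone (fun _ _ hst => Finset.subtype_mono (hF hst)) fun i => by
      simpa using (hE i).1 i.2
  rw [← tsum_subtype]
  refine ((summable_subtype_iff_indicator.2 hf).hasSum.comp hF_tendsto).congr fun s => ?_
  exact Finset.sum_subtype_of_mem f (hsub s)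

theorem sum_add_le_tsum_indicator [PartialOrder M] [IsOrderedAddMonoid M]
    [OrderClosedTopology M] {s : Finset ι} (hs : ↑s ⊆ E) (hf : ∀ i ∈ E, 0 ≤ f i)
    (hsum : Summable (E.indicator f)) {i : ι} (hi : i ∈ E) (his : i ∉ s) :
    ∑ j ∈ s, f j + f i ≤ ∑' j, E.indicator f j := by
  classical
  have hmem : ∀ j ∈ insert i s, j ∈ E := Finset.forall_mem_insert .. |>.2 ⟨hi, fun _ hj => hs hj⟩
  calc ∑ j ∈ s, f j + f i = ∑ j ∈ insert i s, f j := by rw [Finset.sum_insert his, add_comm]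
    _ = ∑ j ∈ insert i s, E.indicator f j :=
      Finset.sum_congr rfl fun j hj => (Set.indicator_of_mem (hmem j hj) f).symm
    _ ≤ ∑' j, E.indicator f j :=
      hsum.sum_le_tsum _ fun j _ => Set.indicator_nonneg hf j

end Sums

/-- `F` is a computable exhaustion of `E ⊆ ℕ`: an increasing sequence of finite stages with union
`E`, given by a decidable membership relation. The bound `F s ⊆ {0, …, s - 1}` makes each stage
computable as a finite object, so that sums over it are computable in `s`. -/
structure IsComputableExhaustion (F : ℕ → Finset ℕ) (E : Set ℕ) : Prop where
  monotone : Monotone F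
  mem_iff : ∀ n, n ∈ E ↔ ∃ s, n ∈ F s
  subset_range : ∀ s, F s ⊆ Finset.range s
  computablePred_mem : ComputablePred fun p : ℕ × ℕ => p.2 ∈ F p.1

theorem exists_isComputableExhaustion {g : ℕ →. ℕ} (hg : Nat.Partrec g) :
    ∃ F, IsComputableExhaustion F {n | (g n).Dom} := by
  obtain ⟨c, rfl⟩ := Nat.Partrec.Code.exists_code.1 hg
  let F (s : ℕ) : Finset ℕ := {n ∈ Finset.range s | (c.evaln s n).isSome}
  have mem_F {s n : ℕ} : n ∈ F s ↔ ∃ y, y ∈ c.evaln s n := by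
    simp only [F, Finset.mem_filter, Finset.mem_range, Option.isSome_iff_exists]
    exact ⟨And.right, fun ⟨y, hy⟩ => ⟨Nat.Partrec.Code.evaln_bound hy, y, hy⟩⟩
  refine ⟨F, fun s t hst n hn => ?_, fun n => ?_, fun s => Finset.filter_subset _ _, ?_⟩
  · obtain ⟨y, hy⟩ := mem_F.1 hn
    exact mem_F.2 ⟨y, Nat.Partrec.Code.evaln_mono hst hy⟩
  · simp only [Set.mem_ofPred_eq, Part.dom_iff_mem, Nat.Partrec.Code.evaln_complete, mem_F]
    exact exists_comm
  · have hevaln : Primrec fun p : ℕ × ℕ => (c.evaln p.1 p.2).isSome :=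
      Primrec.option_isSome.comp (Nat.Partrec.Code.primrec_evaln.comp
        ((Primrec.fst.pair (Primrec.const c)).pair Primrec.snd))
    refine ComputablePred.computable_iff.2 ⟨_, hevaln.to_comp, funext fun p => ?_⟩
    simp only [mem_F, Option.isSome_iff_exists, Option.mem_def]

namespace IsComputableExhaustion

variable {F : ℕ → Finset ℕ} {E : Set ℕ} {w : ℕ → ℚ}

theorem computable_sum (hF : IsComputableExhaustion F E) (hw : Computable w) :
    Computable fun s => ∑ n ∈ F s, w n := by
  have hterm : Computable₂ fun s n => if n ∈ F s then w n else 0 :=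
    (Computable.cond hF.computablePred_mem.decide (hw.comp .snd) (Computable.const 0)).of_eq
      fun p => Bool.cond_decide ..
  refine (computable_rat_sum_range hterm Computable.id).of_eq fun s => ?_
  rw [← Finset.sum_filter, Finset.filter_mem_eq_inter,
    id, Finset.inter_eq_right.2 (hF.subset_range s)]

theorem tendsto_sum (hF : IsComputableExhaustion F E)
    (hsum : Summable (E.indicator fun n => (w n : ℝ))) :
    Tendsto (fun s => ((∑ n ∈ F s, w n : ℚ) : ℝ)) atTop
      (𝓝 (∑' n, E.indicator (fun n => (w n : ℝ)) n)) := by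
  simpa only [Rat.cast_sum] using tendsto_sum_tsum_indicator hF.monotone hF.mem_iff hsum

theorem isLowerComputableReal_tsum (hF : IsComputableExhaustion F E) (hw : Computable w)
    (hpos : ∀ n ∈ E, 0 ≤ w n) (hsum : Summable (E.indicator fun n => (w n : ℝ))) :
    IsLowerComputableReal (∑' n, E.indicator (fun n => (w n : ℝ)) n) :=
  ⟨fun s => ∑ n ∈ F s, w n, hF.computable_sum hw,
    fun _ t hst => Finset.sum_le_sum_of_subset_of_nonneg (hF.monotone hst) fun n hn _ =>
      hpos n ((hF.mem_iff n).2 ⟨t, hn⟩),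
    hF.tendsto_sum hsum⟩

theorem computablePred_of_isComputableReal_tsum (hF : IsComputableExhaustion F E)
    (hw : Computable w) (hpos : ∀ n, 0 < w n) (hsum : Summable (E.indicator fun n => (w n : ℝ)))
    (h : IsComputableReal (∑' n, E.indicator (fun n => (w n : ℝ)) n)) :
    ComputablePred (· ∈ E) := by
  obtain ⟨s, hs, hlt⟩ :=
    h.exists_computable_modulus (hF.computable_sum hw) (hF.tendsto_sum hsum) hw hpos
  refine (computablePred_comp hF.computablePred_mem (hs.pair .id)).of_eq fun n =>
    ⟨fun hn => (hF.mem_iff n).2 ⟨s n, hn⟩, fun hn => ?_⟩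
  by_contra hns
  have hle := sum_add_le_tsum_indicator (fun i hi => (hF.mem_iff i).2 ⟨s n, hi⟩)
    (fun i _ => by exact_mod_cast (hpos i).le) hsum hn hns
  exact (hlt n).not_ge (by simpa only [Rat.cast_sum] using hle)

end IsComputableExhaustion

theorem re_sum_lowerComputable_not_computable_general {E : Set ℕ}
    (hre : ∃ g : ℕ →. ℕ, Nat.Partrec g ∧ E = {n | (g n).Dom})
    (hnc : ¬ ComputablePred (· ∈ E)) {w : ℕ → ℚ} (hw : Computable w) (hpos : ∀ n, 0 < w n)
    (hsum : Summable (E.indicator fun n => (w n : ℝ))) :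
    IsLowerComputableReal (∑' n, E.indicator (fun n => (w n : ℝ)) n) ∧
      ¬ IsComputableReal (∑' n, E.indicator (fun n => (w n : ℝ)) n) := by
  obtain ⟨g, hg, rfl⟩ := hre
  obtain ⟨F, hF⟩ := exists_isComputableExhaustion hg
  exact ⟨hF.isLowerComputableReal_tsum hw (fun n _ => (hpos n).le) hsum,
    fun h => hnc (hF.computablePred_of_isComputableReal_tsum hw hpos hsum h)⟩

theorem summable_inv_pow_succ {b : ℝ} (hb : 1 < b) : Summable fun n : ℕ => (b ^ (n + 1))⁻¹ := by
  simpa only [inv_pow] using (summable_nat_add_iff 1).2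
    (summable_geometric_of_lt_one (inv_nonneg.2 (zero_le_one.trans hb.le))
      (inv_lt_one_of_one_lt₀ hb))

/-- if `E ⊆ ℕ` is recursively enumerable but its membership
predicate is not computable, then `Σ_{n ∈ E} 10^{-(n+1)}` is lower-computable
but not computable. -/
theorem re_sum_lowerComputable_not_computable (E : Set ℕ)
    (hre : ∃ g : ℕ →. ℕ, Nat.Partrec g ∧ E = {n | (g n).Dom})
    (hnc : ¬ ComputablePred (· ∈ E)) :
    IsLowerComputableReal (∑' n : ℕ, E.indicator (fun n => ((10 : ℝ) ^ (n + 1))⁻¹) n) ∧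
      ¬ IsComputableReal (∑' n : ℕ, E.indicator (fun n => ((10 : ℝ) ^ (n + 1))⁻¹) n) := by
  have hw : Computable fun n : ℕ => (((10 : ℕ) : ℚ) ^ (n + 1))⁻¹ :=
    (computable_rat_inv_pow 10 (by norm_num)).comp Computable.succ
  have hsum : Summable fun n : ℕ => ((10 : ℝ) ^ (n + 1))⁻¹ :=
    summable_inv_pow_succ (by norm_num)
  simpa using re_sum_lowerComputable_not_computable_general hre hnc hw
    (fun n => by positivity) (by simpa using hsum.indicator E)
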